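/- Assume there exists at least one generalized pairwise valid rate assignment. Then the set of feasible pairing schemes is nonempty, and the set { Σ_{i : Fin n} Q i (R i) : R generalized pairwise valid } has a least element, equal to the minimum of cost(f) over the (finitely many) feasible pairing schemes f. -/

import Mathlib

open MeasureTheory ProbabilityTheory

/-- Shannon entropy (in nats) of a random variable. -/
noncomputable def shEntropy {Ω : Type*} [MeasurableSpace Ω] {S : Type*}
    (μ : Measure Ω) (X : Ω → S) : ℝ :=
  ∑' x : S, Real.negMulLog (μ (X ⁻¹' {x})).toReal

/-- Conditional Shannon entropy `H[X | Y]`. -/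
noncomputable def shCondEntropy {Ω : Type*} [MeasurableSpace Ω] {S T : Type*}
    (μ : Measure Ω) (X : Ω → S) (Y : Ω → T) : ℝ :=
  ∑' y : T, (μ (Y ⁻¹' {y})).toReal * shEntropy (ProbabilityTheory.cond μ (Y ⁻¹' {y})) X

/-- The power needed at node `i` (channel gain `γ i`) to support rate `r` (in nats). -/
noncomputable def Qpow {n : ℕ} (γ : Fin n → ℝ) (i : Fin n) (r : ℝ) : ℝ :=
  (Real.exp r - 1) / γ i

/-- The two-dimensional Slepian-Wolf region of the pair of sources `X i`, `X j`. -/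
def SWregion {Ω S : Type*} [MeasurableSpace Ω] {n : ℕ}
    (μ : Measure Ω) (X : Fin n → Ω → S) (i j : Fin n) : Set (ℝ × ℝ) :=
  {q : ℝ × ℝ | q.1 ≥ shCondEntropy μ (X i) (X j) ∧ q.2 ≥ shCondEntropy μ (X j) (X i) ∧
    q.1 + q.2 ≥ shEntropy μ (fun ω => (X i ω, X j ω))}

/-- The Slepian-Wolf region intersected with the peak power constraints. -/
def Sregion {Ω S : Type*} [MeasurableSpace Ω] {n : ℕ}
    (μ : Measure Ω) (X : Fin n → Ω → S) (γ : Fin n → ℝ) (Pmax : ℝ)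
    (i j : Fin n) : Set (ℝ × ℝ) :=
  {q : ℝ × ℝ | q ∈ SWregion μ X i j ∧ Qpow γ i q.1 ≤ Pmax ∧ Qpow γ j q.2 ≤ Pmax}

/-- `X i` is initially decodable under `R` if `R i ≥ H[X i]`, or together with some
other source `X j` the rate pair `(R i, R j)` lies in their Slepian-Wolf region. -/
def InitiallyDecodable {Ω S : Type*} [MeasurableSpace Ω] {n : ℕ}
    (μ : Measure Ω) (X : Fin n → Ω → S) (R : Fin n → ℝ) (i : Fin n) : Prop :=
  R i ≥ shEntropy μ (X i) ∨ ∃ j : Fin n, j ≠ i ∧ (R i, R j) ∈ SWregion μ X i j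

/-- The generalized pairwise property: each source is initially decodable, or is
decodable via a chain of sources starting from an initially decodable one. -/
def GenPairwiseProperty {Ω S : Type*} [MeasurableSpace Ω] {n : ℕ}
    (μ : Measure Ω) (X : Fin n → Ω → S) (R : Fin n → ℝ) : Prop :=
  ∀ i : Fin n, InitiallyDecodable μ X R i ∨
    ∃ (k : ℕ) (s : ℕ → Fin n), 1 ≤ k ∧
      InitiallyDecodable μ X R (s 1) ∧
      (∀ j : ℕ, 2 ≤ j → j ≤ k → R (s j) ≥ shCondEntropy μ (X (s j)) (X (s (j - 1)))) ∧
      R i ≥ shCondEntropy μ (X i) (X (s k))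

/-- A rate assignment is generalized pairwise valid if it satisfies the generalized
pairwise property and every node meets the peak power constraint. -/
def GenPairwiseValid {Ω S : Type*} [MeasurableSpace Ω] {n : ℕ}
    (μ : Measure Ω) (X : Fin n → Ω → S) (γ : Fin n → ℝ) (Pmax : ℝ)
    (R : Fin n → ℝ) : Prop :=
  GenPairwiseProperty μ X R ∧ ∀ i : Fin n, Qpow γ i (R i) ≤ Pmax

/-- The decoding relation of a rate assignment: `a` can help decode `b` if
`H[X b | X a] ≤ R b`. -/
def decRel {Ω S : Type*} [MeasurableSpace Ω] {n : ℕ}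
    (μ : Measure Ω) (X : Fin n → Ω → S) (R : Fin n → ℝ) : Fin n → Fin n → Prop :=
  fun a b => shCondEntropy μ (X b) (X a) ≤ R b

/-- The mode of a node in a pairing scheme: a root (transmitting at full entropy),
a child of some node `j` (transmitting at conditional entropy given `X j`), or
matched with some node `j` (jointly decoded with `X j`). -/
inductive PairMode (n : ℕ) where
  | root : PairMode n
  | child (j : Fin n) : PairMode n
  | matched (j : Fin n) : PairMode n
deriving DecidableEq

/-- A pairing scheme: each node is a root, a child of another node, or matched with
another node; matching is symmetric, no two nodes are children of each other, and the
associated undirected graph is acyclic. -/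
structure PairingScheme (n : ℕ) where
  mode : Fin n → PairMode n
  child_ne : ∀ i j : Fin n, mode i = PairMode.child j → j ≠ i
  matched_ne : ∀ i j : Fin n, mode i = PairMode.matched j → j ≠ i
  matched_symm : ∀ i j : Fin n, mode i = PairMode.matched j ↔ mode j = PairMode.matched i
  no_mutual_child : ∀ i j : Fin n, i ≠ j →
    ¬(mode i = PairMode.child j ∧ mode j = PairMode.child i)
  acyclic : (SimpleGraph.fromRel fun i j =>
    mode i = PairMode.matched j ∨ mode i = PairMode.child j ∨
      mode j = PairMode.child i).IsAcyclic

/-- A pairing scheme is feasible if all the prescribed transmissions can be realized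
within the peak power constraint. -/
def PairingScheme.Feasible {Ω S : Type*} [MeasurableSpace Ω] {n : ℕ}
    (f : PairingScheme n) (μ : Measure Ω) (X : Fin n → Ω → S) (γ : Fin n → ℝ)
    (Pmax : ℝ) : Prop :=
  (∀ i : Fin n, f.mode i = PairMode.root → Qpow γ i (shEntropy μ (X i)) ≤ Pmax) ∧
  (∀ i j : Fin n, f.mode i = PairMode.child j →
    Qpow γ i (shCondEntropy μ (X i) (X j)) ≤ Pmax) ∧
  (∀ i j : Fin n, f.mode i = PairMode.matched j →
    (Sregion μ X γ Pmax i j).Nonempty)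

/-- The minimum sum power of a jointly decoded pair `(i, j)`. -/
noncomputable def pairPower {Ω S : Type*} [MeasurableSpace Ω] {n : ℕ}
    (μ : Measure Ω) (X : Fin n → Ω → S) (γ : Fin n → ℝ) (Pmax : ℝ)
    (i j : Fin n) : ℝ :=
  sInf {x : ℝ | ∃ a b : ℝ, (a, b) ∈ Sregion μ X γ Pmax i j ∧ x = Qpow γ i a + Qpow γ j b}

/-- The power contribution of node `i` in a pairing scheme; each member of a matched
pair contributes half of the pair power, so that the pair is counted once in total. -/
noncomputable def schemeContrib {Ω S : Type*} [MeasurableSpace Ω] {n : ℕ}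
    (μ : Measure Ω) (X : Fin n → Ω → S) (γ : Fin n → ℝ) (Pmax : ℝ)
    (f : PairingScheme n) (i : Fin n) : ℝ :=
  match f.mode i with
  | PairMode.root => Qpow γ i (shEntropy μ (X i))
  | PairMode.child j => Qpow γ i (shCondEntropy μ (X i) (X j))
  | PairMode.matched j => (1 / 2) * pairPower μ X γ Pmax i j

/-- The total cost (sum power) of a feasible pairing scheme: roots contribute the power
of their entropy, children the power of their conditional entropy, and each matched
pair (counted once) its minimum sum power. -/
noncomputable def schemeCost {Ω S : Type*} [MeasurableSpace Ω] {n : ℕ}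
    (μ : Measure Ω) (X : Fin n → Ω → S) (γ : Fin n → ℝ) (Pmax : ℝ)
    (f : PairingScheme n) : ℝ :=
  ∑ i : Fin n, schemeContrib μ X γ Pmax f i

/-!
A rate assignment has the generalized pairwise property exactly when every source is reachable,
along the relation `decRel`, from an initially decodable one, and this happens exactly when the
rates realize some pairing scheme. Given reachability, match as many pairs with rates in their
Slepian–Wolf region as possible. An initially decodable source left unmatched either is sent at
full entropy or shares such a region with a matched source and so is one `decRel` step away from
it; hence every source is reachable from the matched ones and the roots. Shortest `decRel` paths
then provide parents of strictly smaller rank, and a rank that decreases along parents rules out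
cycles. Conversely, in an acyclic scheme parent chains terminate, because an infinite sequence in a
forest that never backtracks does not repeat.

The rates realizing a scheme cost at least the cost of the scheme, and compactness of the
power-constrained Slepian–Wolf region gives rates for which equality holds. The minimum over rates
is therefore the minimum over the finitely many feasible schemes.
-/

section Combinatorics

variable {α β V : Type*}

lemma reflTransGen_iff_exists_seq {r : α → α → Prop} {a b : α} :
    Relation.ReflTransGen r a b ↔
      ∃ (k : ℕ) (s : ℕ → α), s 0 = a ∧ s k = b ∧ ∀ j < k, r (s j) (s (j + 1)) := by
  constructor
  · intro h
    induction h with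
    | refl => exact ⟨0, fun _ => a, rfl, rfl, by simp⟩
    | @tail c d _ hcd ih =>
      obtain ⟨k, s, hs₀, hsk, hstep⟩ := ih
      refine ⟨k + 1, Function.update s (k + 1) d, by simpa using hs₀, by simp, fun j hj => ?_⟩
      rcases (Nat.lt_succ_iff.1 hj).eq_or_lt with rfl | hjk
      · simpa [hsk] using hcd
      · simpa [Function.update_of_ne, hjk.ne, hj.ne] using hstep j hjk
  · rintro ⟨k, s, rfl, rfl, hstep⟩
    induction k with
    | zero => rfl
    | succ k ih => exact (ih fun j hj => hstep j (by omega)).tail (hstep k k.lt_succ_self)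

lemma exists_rank_parent_of_reachable {r : α → α → Prop} {B : Set α}
    (hreach : ∀ i, ∃ b ∈ B, Relation.ReflTransGen r b i) :
    ∃ (d : α → ℕ) (p : α → α), ∀ i ∉ B, d (p i) < d i ∧ r (p i) i := by
  classical
  have hpath : ∀ i, ∃ (k : ℕ) (s : ℕ → α), s 0 ∈ B ∧ s k = i ∧ ∀ j < k, r (s j) (s (j + 1)) := by
    intro i
    obtain ⟨b, hb, hbi⟩ := hreach i
    obtain ⟨k, s, rfl, hsk, hstep⟩ := reflTransGen_iff_exists_seq.1 hbi
    exact ⟨k, s, hb, hsk, hstep⟩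
  have hparent : ∀ i, ∃ a, i ∉ B → Nat.find (hpath a) < Nat.find (hpath i) ∧ r a i := fun i => by
    obtain ⟨s, hs₀, hsk, hstep⟩ := Nat.find_spec (hpath i)
    cases hk : Nat.find (hpath i) with
    | zero =>
      rw [hk] at hsk
      exact ⟨i, fun hi => absurd (hsk ▸ hs₀) hi⟩
    | succ k =>
      rw [hk] at hsk hstep
      have hle : Nat.find (hpath (s k)) ≤ k :=
        Nat.find_min' _ ⟨s, hs₀, rfl, fun j hj => hstep j (by omega)⟩
      exact ⟨s k, fun _ => ⟨Nat.lt_succ_of_le hle, hsk ▸ hstep k k.lt_succ_self⟩⟩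
  choose p hp using hparent
  exact ⟨fun i => Nat.find (hpath i), p, hp⟩

lemma exists_involutive_maximal_matching [Finite α] {r : α → α → Prop} (hr : ∀ i j, r i j → r j i) :
    ∃ σ : Equiv.Perm α, Function.Involutive σ ∧ (∀ i, σ i ≠ i → r i (σ i)) ∧
      ∀ i j, i ≠ j → σ i = i → σ j = j → ¬ r i j := by
  classical
  have := Fintype.ofFinite α
  obtain ⟨σ, ⟨hinv, hσr⟩, hmax⟩ := Set.exists_max_image
    {σ : Equiv.Perm α | Function.Involutive σ ∧ ∀ i, σ i ≠ i → r i (σ i)}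
    (fun σ => σ.support.card) (Set.toFinite _) ⟨1, fun _ => rfl, fun i hi => absurd rfl hi⟩
  refine ⟨σ, hinv, hσr, fun i j hij hi hj hrij => ?_⟩
  have hdisj : (Equiv.swap i j).Disjoint σ :=
    Equiv.Perm.disjoint_iff_disjoint_support.2 (by simp [Equiv.Perm.support_swap hij, hi, hj])
  have hcomm : ∀ x, Equiv.swap i j (σ x) = σ (Equiv.swap i j x) :=
    Equiv.congr_fun hdisj.commute.eq
  have hcard := hdisj.card_support_mul
  rw [Equiv.Perm.card_support_swap hij] at hcard
  refine absurd (hmax (Equiv.swap i j * σ) ⟨fun x => ?_, fun x hx => ?_⟩) (by omega)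
  · calc Equiv.swap i j (σ (Equiv.swap i j (σ x)))
        = Equiv.swap i j (Equiv.swap i j (σ (σ x))) := by rw [hcomm (σ x)]
      _ = x := by rw [Equiv.swap_apply_self, hinv x]
  · rw [Equiv.Perm.mul_apply] at hx ⊢
    rcases hdisj x with hswap | hfix
    · rw [hcomm, hswap] at hx ⊢
      exact hσr x hx
    · rw [hfix] at hx ⊢
      obtain ⟨-, rfl | rfl⟩ := Equiv.swap_apply_ne_self_iff.1 hx
      · rwa [Equiv.swap_apply_left]
      · rw [Equiv.swap_apply_right]
        exact hr _ _ hrij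

lemma sum_half_add_comp_of_involutive {K : Type*} [DivisionSemiring K] [NeZero (2 : K)] [Fintype α]
    {σ : α → α} (hσ : Function.Involutive σ) (q : α → K) :
    ∑ i, 1 / 2 * (q i + q (σ i)) = ∑ i, q i := by
  have hcomp : ∑ i, q (σ i) = ∑ i, q i := Equiv.sum_comp hσ.toPerm q
  rw [← Finset.mul_sum, Finset.sum_add_distrib, hcomp, ← two_mul, ← mul_assoc,
    one_div_mul_cancel two_ne_zero, one_mul]

lemma exists_coherent_choice [LinearOrder α] {P : α → α → β → β → Prop}
    (hsymm : ∀ i j a b, P i j a b → P j i b a) (hP : ∀ i j, ∃ a b, P i j a b) :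
    ∃ c : α → α → β, ∀ i j, i ≠ j → P i j (c i j) (c j i) := by
  choose a b hab using hP
  refine ⟨fun i j => if i < j then a i j else b j i, fun i j hij => ?_⟩
  rcases hij.lt_or_gt with h | h
  · simpa [h, h.not_gt] using hab i j
  · simpa [h, h.not_gt] using hsymm j i _ _ (hab j i)

lemma isAcyclic_of_subsingleton_adj_le [LinearOrder α] {G : SimpleGraph V} (d : V → α)
    (h : ∀ v, {w | G.Adj v w ∧ d w ≤ d v}.Subsingleton) : G.IsAcyclic := by
  classical
  intro v c hc
  obtain ⟨u, hu, hmax⟩ := c.support.toFinset.exists_max_image d ⟨v, by simp⟩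
  rw [List.mem_toFinset] at hu
  have hcycle : (c.rotate u hu).IsCycle := hc.rotate hu
  have hle : ∀ x ∈ (c.rotate u hu).support, d x ≤ d u := fun x hx => hmax x (by simpa using hx)
  -- The two neighbours on the cycle of its vertex of largest rank would have to coincide.
  exact hcycle.snd_ne_penultimate <| h u
    ⟨SimpleGraph.Walk.adj_snd hcycle.not_nil, hle _ (SimpleGraph.Walk.getVert_mem_support _ _)⟩
    ⟨(SimpleGraph.Walk.adj_penultimate hcycle.not_nil).symm,
      hle _ (SimpleGraph.Walk.getVert_mem_support _ _)⟩

lemma exists_walk_edges_eq_map_range {G : SimpleGraph V} {u : ℕ → V}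
    (hadj : ∀ k, G.Adj (u k) (u (k + 1))) (k l : ℕ) :
    ∃ p : G.Walk (u k) (u (k + l)),
      p.edges = (List.range l).map fun j => s(u (k + j), u (k + j + 1)) := by
  induction l with
  | zero => exact ⟨SimpleGraph.Walk.nil, rfl⟩
  | succ l ih =>
    obtain ⟨p, hp⟩ := ih
    refine ⟨p.concat (hadj (k + l)), ?_⟩
    rw [SimpleGraph.Walk.edges_concat, hp, List.range_succ, List.map_append, List.concat_eq_append,
      List.map_singleton]
    rfl

lemma injective_of_isAcyclic_of_not_backtracking {G : SimpleGraph V} (hG : G.IsAcyclic)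
    {u : ℕ → V} (hadj : ∀ k, G.Adj (u k) (u (k + 1))) (hback : ∀ k, u (k + 2) ≠ u k) :
    Function.Injective u := by
  refine .of_lt_imp_ne fun k m hkm heq => ?_
  obtain ⟨l, rfl⟩ := Nat.exists_eq_add_of_lt hkm
  obtain ⟨p, hp⟩ := exists_walk_edges_eq_map_range hadj k (l + 1)
  have hpath : p.IsPath := by
    rw [hG.isPath_iff_isChain, hp, List.isChain_map, List.isChain_range]
    intro j _ hedge
    rcases Sym2.eq_iff.1 hedge with h | h
    · exact (hadj _).ne h.1
    · exact hback _ h.1.symm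
  have hnil : p.edges = [] := SimpleGraph.Walk.edges_eq_nil.2 (hpath.nil_iff_eq.2 heq)
  simp [hp] at hnil

end Combinatorics

section Power

variable {n : ℕ} {γ : Fin n → ℝ} {i : Fin n}

lemma Qpow_monotone (hγ : 0 ≤ γ i) : Monotone (Qpow γ i) := fun a b hab => by
  unfold Qpow
  gcongr

lemma continuous_Qpow (γ : Fin n → ℝ) (i : Fin n) : Continuous (Qpow γ i) := by
  unfold Qpow
  fun_prop

lemma le_mul_of_Qpow_le (hγ : 0 < γ i) {r P : ℝ} (h : Qpow γ i r ≤ P) : r ≤ P * γ i := by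
  have hexp : Real.exp r - 1 ≤ P * γ i := (div_le_iff₀ hγ).1 h
  linarith [Real.add_one_le_exp r]

end Power

lemma shEntropy_equiv_comp {Ω S T : Type*} [MeasurableSpace Ω] (μ : Measure Ω) (e : S ≃ T)
    (X : Ω → S) : shEntropy μ (e ∘ X) = shEntropy μ X := by
  unfold shEntropy
  rw [← e.tsum_eq]
  simp only [Set.preimage_comp, ← Set.image_singleton, e.preimage_image]

section SlepianWolf

variable {Ω S : Type*} [MeasurableSpace Ω] {n : ℕ} {μ : Measure Ω} {X : Fin n → Ω → S}
  {γ : Fin n → ℝ} {Pmax : ℝ} {i j : Fin n} {a b : ℝ}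

lemma swap_mem_SWregion (h : (a, b) ∈ SWregion μ X i j) : (b, a) ∈ SWregion μ X j i := by
  obtain ⟨ha, hb, hab⟩ := h
  have hjoint : shEntropy μ (fun ω => (X j ω, X i ω)) = shEntropy μ (fun ω => (X i ω, X j ω)) :=
    shEntropy_equiv_comp μ (Equiv.prodComm S S) fun ω => (X i ω, X j ω)
  exact ⟨hb, ha, by rw [hjoint, add_comm]; exact hab⟩

lemma swap_mem_Sregion (h : (a, b) ∈ Sregion μ X γ Pmax i j) :
    (b, a) ∈ Sregion μ X γ Pmax j i :=
  ⟨swap_mem_SWregion h.1, h.2.2, h.2.1⟩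

lemma pairPower_comm : pairPower μ X γ Pmax i j = pairPower μ X γ Pmax j i := by
  unfold pairPower
  congr 1
  ext x
  constructor <;>
  · rintro ⟨a, b, hab, rfl⟩
    exact ⟨b, a, swap_mem_Sregion hab, add_comm _ _⟩

lemma isCompact_Sregion (hi : 0 < γ i) (hj : 0 < γ j) :
    IsCompact (Sregion μ X γ Pmax i j) := by
  have hbox : IsCompact (Set.Icc (shCondEntropy μ (X i) (X j)) (Pmax * γ i) ×ˢ
      Set.Icc (shCondEntropy μ (X j) (X i)) (Pmax * γ j)) := isCompact_Icc.prod isCompact_Icc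
  have hSW : IsClosed (SWregion μ X i j) :=
    (isClosed_le continuous_const continuous_fst).inter <|
      (isClosed_le continuous_const continuous_snd).inter <|
        isClosed_le continuous_const (continuous_fst.add continuous_snd)
  have hpeak : IsClosed {q : ℝ × ℝ | Qpow γ i q.1 ≤ Pmax ∧ Qpow γ j q.2 ≤ Pmax} :=
    (isClosed_le ((continuous_Qpow γ i).comp continuous_fst) continuous_const).inter <|
      isClosed_le ((continuous_Qpow γ j).comp continuous_snd) continuous_const
  refine hbox.of_isClosed_subset (hSW.inter hpeak) ?_
  rintro q ⟨⟨hq₁, hq₂, _⟩, hQ₁, hQ₂⟩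
  exact ⟨⟨hq₁, le_mul_of_Qpow_le hi hQ₁⟩, ⟨hq₂, le_mul_of_Qpow_le hj hQ₂⟩⟩

lemma isLeast_pairPower (hi : 0 < γ i) (hj : 0 < γ j)
    (hne : (Sregion μ X γ Pmax i j).Nonempty) :
    IsLeast {x | ∃ a b, (a, b) ∈ Sregion μ X γ Pmax i j ∧ x = Qpow γ i a + Qpow γ j b}
      (pairPower μ X γ Pmax i j) := by
  have hcont : Continuous fun q : ℝ × ℝ => Qpow γ i q.1 + Qpow γ j q.2 :=
    ((continuous_Qpow γ i).comp continuous_fst).add ((continuous_Qpow γ j).comp continuous_snd)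
  obtain ⟨q, hq, hmin⟩ := (isCompact_Sregion hi hj).exists_isMinOn hne hcont.continuousOn
  have hleast : IsLeast {x | ∃ a b, (a, b) ∈ Sregion μ X γ Pmax i j ∧
      x = Qpow γ i a + Qpow γ j b} (Qpow γ i q.1 + Qpow γ j q.2) := by
    refine ⟨⟨q.1, q.2, hq, rfl⟩, ?_⟩
    rintro x ⟨a, b, hab, rfl⟩
    exact hmin hab
  rwa [pairPower, hleast.csInf_eq]

end SlepianWolf

lemma genPairwiseProperty_iff_reachable {Ω S : Type*} [MeasurableSpace Ω] {n : ℕ}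
    {μ : Measure Ω} {X : Fin n → Ω → S} {R : Fin n → ℝ} :
    GenPairwiseProperty μ X R ↔ ∀ i, ∃ b, InitiallyDecodable μ X R b ∧
      Relation.ReflTransGen (decRel μ X R) b i := by
  refine forall_congr' fun i => ⟨?_, ?_⟩
  · rintro (hi | ⟨k, s, hk, hinit, hstep, hlast⟩)
    · exact ⟨i, hi, .refl⟩
    · refine ⟨s 1, hinit, .tail (reflTransGen_iff_exists_seq.2
        ⟨k - 1, fun j => s (j + 1), rfl, congrArg s (by omega), fun j hj => ?_⟩) hlast⟩
      exact hstep (j + 2) (by omega) (by omega)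
  · rintro ⟨b, hb, hbi⟩
    rcases hbi.cases_tail with rfl | ⟨c, hbc, hci⟩
    · exact Or.inl hb
    · obtain ⟨k, s, rfl, rfl, hstep⟩ := reflTransGen_iff_exists_seq.1 hbc
      refine Or.inr ⟨k + 1, fun j => s (j - 1), by omega, hb, fun j hj hjk => ?_, hci⟩
      obtain ⟨j, rfl⟩ := Nat.exists_eq_add_of_le' hj
      exact hstep j (by omega)

namespace PairMode

variable {n : ℕ} {σ p : Fin n → Fin n} {T : Set (Fin n)} {i j : Fin n}

open Classical in
/-- The modes determined by a matching `σ` (whose fixed points are the unmatched nodes), a set `T`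
of prospective roots and a parent map `p`. A matched node is never a root, even if it lies
in `T`. -/
noncomputable def assign (σ : Fin n → Fin n) (T : Set (Fin n)) (p : Fin n → Fin n)
    (i : Fin n) : PairMode n :=
  if σ i ≠ i then matched (σ i) else if i ∈ T then root else child (p i)

lemma assign_eq_root_iff : assign σ T p i = root ↔ σ i = i ∧ i ∈ T := by
  grind [assign]

lemma assign_eq_child_iff : assign σ T p i = child j ↔ σ i = i ∧ i ∉ T ∧ p i = j := by
  grind [assign]

lemma assign_eq_matched_iff : assign σ T p i = matched j ↔ σ i ≠ i ∧ σ i = j := by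
  grind [assign]

instance finite (n : ℕ) : Finite (PairMode n) := by
  let code : PairMode n → Option (Fin n ⊕ Fin n)
    | .root => none
    | .child j => some (.inl j)
    | .matched j => some (.inr j)
  refine Finite.of_injective code fun a b h => ?_
  cases a <;> cases b <;> simp_all [code]

end PairMode

namespace PairingScheme

variable {n : ℕ}

instance finite (n : ℕ) : Finite (PairingScheme n) :=
  Finite.of_injective mode fun f g h => by cases f; congr

/-- The pairing scheme with given modes whose children have parents of strictly smaller rank `d`;
the rank replaces the acyclicity condition. -/
def ofRank {α : Type*} [LinearOrder α] (mode : Fin n → PairMode n) (d : Fin n → α)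
    (child_lt : ∀ i j, mode i = .child j → d j < d i)
    (matched_ne : ∀ i j, mode i = .matched j → j ≠ i)
    (matched_symm : ∀ i j, mode i = .matched j → mode j = .matched i) : PairingScheme n where
  mode := mode
  child_ne := fun i j h hji => (child_lt i j h).ne (congrArg d hji)
  matched_ne := matched_ne
  matched_symm := fun i j => ⟨matched_symm i j, matched_symm j i⟩
  no_mutual_child := fun i j _ h => (child_lt i j h.1).asymm (child_lt j i h.2)
  acyclic := by
    refine isAcyclic_of_subsingleton_adj_le d fun v => ?_
    have hdown : ∀ w, (SimpleGraph.fromRel fun i j => mode i = PairMode.matched j ∨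
        mode i = PairMode.child j ∨ mode j = PairMode.child i).Adj v w ∧ d w ≤ d v →
        mode v = .matched w ∨ mode v = .child w := by
      rintro w ⟨hvw, hle⟩
      have hnot : mode w ≠ .child v := fun h => (child_lt w v h).not_ge hle
      rw [SimpleGraph.fromRel_adj] at hvw
      have := matched_symm w v
      tauto
    intro a ha b hb
    rcases hdown a ha with h | h <;> rcases hdown b hb with h' | h' <;>
      simp_all

lemma wellFounded_parent (f : PairingScheme n) :
    WellFounded fun j i => f.mode i = PairMode.child j := by
  refine wellFounded_iff_isEmpty_descending_chain.2 ⟨fun ⟨u, hu⟩ => ?_⟩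
  refine not_injective_infinite_finite u
    (injective_of_isAcyclic_of_not_backtracking f.acyclic (fun k => ?_) fun k hk => ?_)
  · exact (SimpleGraph.fromRel_adj _ _ _).2
      ⟨(f.child_ne _ _ (hu k)).symm, Or.inl (Or.inr (Or.inl (hu k)))⟩
  · exact f.no_mutual_child _ _ (f.child_ne _ _ (hu k)).symm ⟨hu k, hk ▸ hu (k + 1)⟩

/-- The involution exchanging the two members of each matched pair and fixing all other nodes. -/
def partner (f : PairingScheme n) (i : Fin n) : Fin n :=
  match f.mode i with
  | .matched j => j
  | _ => i

lemma partner_involutive (f : PairingScheme n) : Function.Involutive f.partner := fun i => by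
  cases h : f.mode i with
  | root => simp only [partner, h]
  | child j => simp only [partner, h]
  | matched j => simp only [partner, h, (f.matched_symm i j).1 h]

variable {Ω S : Type*} [MeasurableSpace Ω] {μ : Measure Ω} {X : Fin n → Ω → S}
  {γ : Fin n → ℝ} {Pmax : ℝ} {R : Fin n → ℝ} {f : PairingScheme n}

/-- The rates `R` are large enough for every source to be decoded in the mode that `f`
prescribes. -/
structure RealizedBy (f : PairingScheme n) (μ : Measure Ω) (X : Fin n → Ω → S)
    (R : Fin n → ℝ) : Prop where
  root_le : ∀ i, f.mode i = .root → shEntropy μ (X i) ≤ R i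
  child_le : ∀ i j, f.mode i = .child j → shCondEntropy μ (X i) (X j) ≤ R i
  matched_mem : ∀ i j, f.mode i = .matched j → (R i, R j) ∈ SWregion μ X i j

lemma RealizedBy.genPairwiseProperty (h : f.RealizedBy μ X R) : GenPairwiseProperty μ X R := by
  refine genPairwiseProperty_iff_reachable.2 fun i => ?_
  induction i using f.wellFounded_parent.induction with
  | _ i ih =>
    cases hi : f.mode i with
    | root => exact ⟨i, Or.inl (h.root_le i hi), .refl⟩
    | child j =>
      obtain ⟨b, hb, hbj⟩ := ih j hi
      exact ⟨b, hb, hbj.tail (h.child_le i j hi)⟩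
    | matched j => exact ⟨i, Or.inr ⟨j, f.matched_ne i j hi, h.matched_mem i j hi⟩, .refl⟩

lemma RealizedBy.feasible (h : f.RealizedBy μ X R) (hγ : ∀ i, 0 ≤ γ i)
    (hpeak : ∀ i, Qpow γ i (R i) ≤ Pmax) : f.Feasible μ X γ Pmax :=
  ⟨fun i hi => (Qpow_monotone (hγ i) (h.root_le i hi)).trans (hpeak i),
    fun i j hi => (Qpow_monotone (hγ i) (h.child_le i j hi)).trans (hpeak i),
    fun i j hi => ⟨_, h.matched_mem i j hi, hpeak i, hpeak j⟩⟩

lemma RealizedBy.schemeContrib_le (h : f.RealizedBy μ X R) (hγ : ∀ i, 0 < γ i)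
    (hpeak : ∀ i, Qpow γ i (R i) ≤ Pmax) (i : Fin n) :
    schemeContrib μ X γ Pmax f i ≤
      1 / 2 * (Qpow γ i (R i) + Qpow γ (f.partner i) (R (f.partner i))) := by
  cases hi : f.mode i with
  | root =>
    simp only [schemeContrib, partner, hi]
    linarith [Qpow_monotone (hγ i).le (h.root_le i hi)]
  | child j =>
    simp only [schemeContrib, partner, hi]
    linarith [Qpow_monotone (hγ i).le (h.child_le i j hi)]
  | matched j =>
    have hmem : (R i, R j) ∈ Sregion μ X γ Pmax i j := ⟨h.matched_mem i j hi, hpeak i, hpeak j⟩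
    have hle : pairPower μ X γ Pmax i j ≤ Qpow γ i (R i) + Qpow γ j (R j) :=
      (isLeast_pairPower (hγ i) (hγ j) ⟨_, hmem⟩).2 ⟨_, _, hmem, rfl⟩
    simp only [schemeContrib, partner, hi]
    linarith

lemma RealizedBy.schemeCost_le (h : f.RealizedBy μ X R) (hγ : ∀ i, 0 < γ i)
    (hpeak : ∀ i, Qpow γ i (R i) ≤ Pmax) :
    schemeCost μ X γ Pmax f ≤ ∑ i, Qpow γ i (R i) :=
  calc schemeCost μ X γ Pmax f
      ≤ ∑ i, 1 / 2 * (Qpow γ i (R i) + Qpow γ (f.partner i) (R (f.partner i))) :=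
        Finset.sum_le_sum fun i _ => h.schemeContrib_le hγ hpeak i
    _ = ∑ i, Qpow γ i (R i) :=
        sum_half_add_comp_of_involutive f.partner_involutive fun i => Qpow γ i (R i)

lemma exists_realizedBy_of_reachable {σ : Fin n → Fin n} (hσ : Function.Involutive σ)
    (hpair : ∀ i, σ i ≠ i → (R i, R (σ i)) ∈ SWregion μ X i (σ i))
    (hreach : ∀ i, ∃ b ∈ {b | σ b ≠ b ∨ shEntropy μ (X b) ≤ R b},
      Relation.ReflTransGen (decRel μ X R) b i) :
    ∃ f : PairingScheme n, f.RealizedBy μ X R := by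
  obtain ⟨d, p, hp⟩ := exists_rank_parent_of_reachable hreach
  have hchild : ∀ i j, PairMode.assign σ {b | shEntropy μ (X b) ≤ R b} p i = .child j →
      d j < d i ∧ decRel μ X R j i := fun i j h => by
    obtain ⟨hi, hroot, rfl⟩ := PairMode.assign_eq_child_iff.1 h
    exact hp i fun hB => hB.elim (fun hne => hne hi) hroot
  refine ⟨ofRank (PairMode.assign σ {b | shEntropy μ (X b) ≤ R b} p) d
    (fun i j h => (hchild i j h).1) (fun i j h => ?_) (fun i j h => ?_),
    fun i h => (PairMode.assign_eq_root_iff.1 h).2, fun i j h => (hchild i j h).2,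
    fun i j h => ?_⟩
  all_goals obtain ⟨hi, rfl⟩ := PairMode.assign_eq_matched_iff.1 h
  · exact hi
  · exact PairMode.assign_eq_matched_iff.2 ⟨by rwa [hσ i, ne_comm], hσ i⟩
  · exact hpair i hi

/-- The rates `R` use exactly the power that `f` accounts for: entropy at roots, conditional
entropy at children, and a power-minimizing pair of rates on each matched pair. -/
structure AttainedBy (f : PairingScheme n) (μ : Measure Ω) (X : Fin n → Ω → S)
    (γ : Fin n → ℝ) (Pmax : ℝ) (R : Fin n → ℝ) : Prop where
  root_eq : ∀ i, f.mode i = .root → R i = shEntropy μ (X i)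
  child_eq : ∀ i j, f.mode i = .child j → R i = shCondEntropy μ (X i) (X j)
  matched_mem : ∀ i j, f.mode i = .matched j → (R i, R j) ∈ Sregion μ X γ Pmax i j
  pairPower_eq : ∀ i j, f.mode i = .matched j →
    pairPower μ X γ Pmax i j = Qpow γ i (R i) + Qpow γ j (R j)

lemma Feasible.exists_attainedBy (hf : f.Feasible μ X γ Pmax) (hγ : ∀ i, 0 < γ i) :
    ∃ R, f.AttainedBy μ X γ Pmax R := by
  obtain ⟨c, hc⟩ := exists_coherent_choice (P := fun i j a b => f.mode i = .matched j →
      (a, b) ∈ Sregion μ X γ Pmax i j ∧ pairPower μ X γ Pmax i j = Qpow γ i a + Qpow γ j b)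
    (fun i j a b h hj => by
      obtain ⟨hab, hpower⟩ := h ((f.matched_symm i j).2 hj)
      exact ⟨swap_mem_Sregion hab, by rw [pairPower_comm, hpower, add_comm]⟩)
    (fun i j => by
      by_cases hij : f.mode i = .matched j
      · obtain ⟨a, b, hab⟩ := (isLeast_pairPower (hγ i) (hγ j) (hf.2.2 i j hij)).1
        exact ⟨a, b, fun _ => hab⟩
      · exact ⟨0, 0, fun h => absurd h hij⟩)
  let R : Fin n → ℝ := fun i => match f.mode i with
    | .root => shEntropy μ (X i)
    | .child j => shCondEntropy μ (X i) (X j)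
    | .matched j => c i j
  have hpair : ∀ i j, f.mode i = .matched j → (R i, R j) ∈ Sregion μ X γ Pmax i j ∧
      pairPower μ X γ Pmax i j = Qpow γ i (R i) + Qpow γ j (R j) := fun i j hi => by
    simpa only [R, hi, (f.matched_symm i j).1 hi] using hc i j (f.matched_ne i j hi).symm hi
  exact ⟨R, fun i hi => by simp only [R, hi], fun i j hi => by simp only [R, hi],
    fun i j hi => (hpair i j hi).1, fun i j hi => (hpair i j hi).2⟩

lemma AttainedBy.realizedBy (h : f.AttainedBy μ X γ Pmax R) : f.RealizedBy μ X R where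
  root_le i hi := (h.root_eq i hi).ge
  child_le i j hi := (h.child_eq i j hi).ge
  matched_mem i j hi := (h.matched_mem i j hi).1

lemma AttainedBy.Qpow_le (h : f.AttainedBy μ X γ Pmax R) (hf : f.Feasible μ X γ Pmax)
    (i : Fin n) : Qpow γ i (R i) ≤ Pmax := by
  cases hi : f.mode i with
  | root => exact h.root_eq i hi ▸ hf.1 i hi
  | child j => exact h.child_eq i j hi ▸ hf.2.1 i j hi
  | matched j => exact (h.matched_mem i j hi).2.1

lemma AttainedBy.schemeCost_eq (h : f.AttainedBy μ X γ Pmax R) :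
    schemeCost μ X γ Pmax f = ∑ i, Qpow γ i (R i) := by
  rw [← sum_half_add_comp_of_involutive f.partner_involutive fun i => Qpow γ i (R i)]
  refine Finset.sum_congr rfl fun i _ => ?_
  cases hi : f.mode i with
  | root =>
    simp only [schemeContrib, partner, hi, h.root_eq i hi]
    ring
  | child j =>
    simp only [schemeContrib, partner, hi, h.child_eq i j hi]
    ring
  | matched j => simp only [schemeContrib, partner, hi, h.pairPower_eq i j hi]

end PairingScheme

section Equivalence

variable {Ω S : Type*} [MeasurableSpace Ω] {n : ℕ} {μ : Measure Ω} {X : Fin n → Ω → S}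
  {γ : Fin n → ℝ} {Pmax : ℝ} {R : Fin n → ℝ}

lemma GenPairwiseProperty.exists_realizedBy (h : GenPairwiseProperty μ X R) :
    ∃ f : PairingScheme n, f.RealizedBy μ X R := by
  obtain ⟨σ, hσ, hpair, hmax⟩ := exists_involutive_maximal_matching
    (r := fun i j => (R i, R j) ∈ SWregion μ X i j) fun i j => swap_mem_SWregion
  refine PairingScheme.exists_realizedBy_of_reachable hσ hpair fun i => ?_
  obtain ⟨b, hb, hbi⟩ := genPairwiseProperty_iff_reachable.1 h i
  rcases hb with hroot | ⟨j, hjb, hSW⟩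
  · exact ⟨b, Or.inr hroot, hbi⟩
  by_cases hbσ : σ b = b
  · have hj : σ j ≠ j := fun hjσ => hmax b j hjb.symm hbσ hjσ hSW
    exact ⟨j, Or.inl hj, .head hSW.1 hbi⟩
  · exact ⟨b, Or.inl hbσ, hbi⟩

theorem genPairwiseProperty_iff_exists_realizedBy :
    GenPairwiseProperty μ X R ↔ ∃ f : PairingScheme n, f.RealizedBy μ X R :=
  ⟨fun h => h.exists_realizedBy, fun ⟨_, hf⟩ => hf.genPairwiseProperty⟩

lemma GenPairwiseValid.exists_feasible_schemeCost_le (hR : GenPairwiseValid μ X γ Pmax R)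
    (hγ : ∀ i, 0 < γ i) :
    ∃ f : PairingScheme n, f.Feasible μ X γ Pmax ∧
      schemeCost μ X γ Pmax f ≤ ∑ i, Qpow γ i (R i) := by
  obtain ⟨f, hf⟩ := genPairwiseProperty_iff_exists_realizedBy.1 hR.1
  exact ⟨f, hf.feasible (fun i => (hγ i).le) hR.2, hf.schemeCost_le hγ hR.2⟩

lemma PairingScheme.Feasible.exists_genPairwiseValid {f : PairingScheme n}
    (hf : f.Feasible μ X γ Pmax) (hγ : ∀ i, 0 < γ i) :
    ∃ R, GenPairwiseValid μ X γ Pmax R ∧ schemeCost μ X γ Pmax f = ∑ i, Qpow γ i (R i) := by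
  obtain ⟨R, hR⟩ := hf.exists_attainedBy hγ
  exact ⟨R, ⟨genPairwiseProperty_iff_exists_realizedBy.2 ⟨f, hR.realizedBy⟩, hR.Qpow_le hf⟩,
    hR.schemeCost_eq⟩

end Equivalence

theorem minSumPower_eq_minSchemeCost_general
    {Ω S : Type*} [MeasurableSpace Ω] (μ : Measure Ω) {n : ℕ} (X : Fin n → Ω → S)
    (γ : Fin n → ℝ) (hγ : ∀ i, 0 < γ i) (Pmax : ℝ)
    (hex : ∃ R : Fin n → ℝ, GenPairwiseValid μ X γ Pmax R) :
    (∃ f : PairingScheme n, f.Feasible μ X γ Pmax) ∧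
    ∃ m : ℝ,
      IsLeast {x : ℝ | ∃ R : Fin n → ℝ, GenPairwiseValid μ X γ Pmax R ∧
        x = ∑ i : Fin n, Qpow γ i (R i)} m ∧
      IsLeast {c : ℝ | ∃ f : PairingScheme n, f.Feasible μ X γ Pmax ∧
        c = schemeCost μ X γ Pmax f} m := by
  obtain ⟨R₀, hR₀⟩ := hex
  obtain ⟨f₀, hf₀, -⟩ := hR₀.exists_feasible_schemeCost_le hγ
  obtain ⟨f, hf, hmin⟩ := Set.exists_min_image {f : PairingScheme n | f.Feasible μ X γ Pmax}
    (schemeCost μ X γ Pmax) (Set.toFinite _) ⟨f₀, hf₀⟩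
  refine ⟨⟨f, hf⟩, schemeCost μ X γ Pmax f, ⟨hf.exists_genPairwiseValid hγ, ?_⟩,
    ⟨f, hf, rfl⟩, ?_⟩
  · rintro _ ⟨R, hR, rfl⟩
    obtain ⟨g, hg, hle⟩ := hR.exists_feasible_schemeCost_le hγ
    exact (hmin g hg).trans hle
  · rintro _ ⟨g, hg, rfl⟩
    exact hmin g hg

/-- If some generalized pairwise valid rate assignment exists, then feasible pairing
schemes exist, and the set of achievable sum powers of generalized pairwise valid rate
assignments has a least element equal to the minimum cost over feasible schemes. -/
theorem minSumPower_eq_minSchemeCost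
    {Ω S : Type*} [MeasurableSpace Ω] [MeasurableSpace S] [MeasurableSingletonClass S]
    (μ : Measure Ω) [IsProbabilityMeasure μ] {n : ℕ} (hn : 1 ≤ n)
    (X : Fin n → Ω → S) (hX : ∀ i, Measurable (X i))
    (hfin : ∀ i, (Set.range (X i)).Finite)
    (γ : Fin n → ℝ) (hγ : ∀ i, 0 < γ i) (Pmax : ℝ) (hP : 0 < Pmax)
    (hex : ∃ R : Fin n → ℝ, GenPairwiseValid μ X γ Pmax R) :
    (∃ f : PairingScheme n, f.Feasible μ X γ Pmax) ∧
    ∃ m : ℝ,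
      IsLeast {x : ℝ | ∃ R : Fin n → ℝ, GenPairwiseValid μ X γ Pmax R ∧
        x = ∑ i : Fin n, Qpow γ i (R i)} m ∧
      IsLeast {c : ℝ | ∃ f : PairingScheme n, f.Feasible μ X γ Pmax ∧
        c = schemeCost μ X γ Pmax f} m :=
  minSumPower_eq_minSchemeCost_general μ X γ hγ Pmax hex
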